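/- Existence of an edge-minimal realization: Let r̲ : Fin n₁ → ℕ and c̲ : Fin n₂ → ℕ be non-increasing integer vectors and r̄ : Fin n₁ → ℕ, c̄ : Fin n₂ → ℕ integer vectors with r̲ ≤ r̄ and c̲ ≤ c̄ componentwise, such that the four-tuple (r̲, r̄, c̲, c̄) is realizable. Then there exists a realization M of (r̲, r̄, c̲, c̄) with exactly S_{n₂}(c̲) + max(0, δ₁) edges, where δ₁ = max over 1 ≤ j ≤ n₁ of (S_j(r̲) − S_j(c̲')) computed in the integers and c̲' is the conjugate of c̲ of length n₁; consequently this realization has the minimum possible number of edges among all realizations of (r̲, r̄, c̲, c̄). -/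

import Mathlib

open Finset

/-- Degree of row vertex `i` in a bipartite graph given by biadjacency matrix `M`. -/
def degU {n₁ n₂ : ℕ} (M : Fin n₁ → Fin n₂ → Bool) (i : Fin n₁) : ℕ :=
  (univ.filter fun j => M i j = true).card

/-- Degree of column vertex `j` in a bipartite graph given by biadjacency matrix `M`. -/
def degV {n₁ n₂ : ℕ} (M : Fin n₁ → Fin n₂ → Bool) (j : Fin n₂) : ℕ :=
  (univ.filter fun i => M i j = true).card

/-- `psum x k` = sum of the first `k` components of the vector `x`. -/
def psum {n : ℕ} (x : Fin n → ℕ) (k : ℕ) : ℕ :=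
  ∑ i ∈ univ.filter (fun i : Fin n => (i : ℕ) < k), x i

/-- `conj x i` = the `i`-th component (1-based) of the conjugate vector of `x`:
the number of indices `j` with `x j ≥ i`. -/
def conj {m : ℕ} (x : Fin m → ℕ) (i : ℕ) : ℕ :=
  (univ.filter fun j : Fin m => i ≤ x j).card

/-- The conjugate vector of `x`, taken with length `n`. -/
def conjVec (n : ℕ) {m : ℕ} (x : Fin m → ℕ) : Fin n → ℕ :=
  fun i => conj x ((i : ℕ) + 1)

/-- A pair `(r, c)` is bi-graphical if some biadjacency matrix realizes these
degrees exactly. -/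
def BiGraphical {n₁ n₂ : ℕ} (r : Fin n₁ → ℕ) (c : Fin n₂ → ℕ) : Prop :=
  ∃ M : Fin n₁ → Fin n₂ → Bool, (∀ i, degU M i = r i) ∧ (∀ j, degV M j = c j)

/-- `M` is a realization of the four-tuple `(rl, ru, cl, cu)`. -/
def IsRealization {n₁ n₂ : ℕ} (rl ru : Fin n₁ → ℕ) (cl cu : Fin n₂ → ℕ)
    (M : Fin n₁ → Fin n₂ → Bool) : Prop :=
  (∀ i, rl i ≤ degU M i ∧ degU M i ≤ ru i) ∧ (∀ j, cl j ≤ degV M j ∧ degV M j ≤ cu j)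

/-- The four-tuple `(rl, ru, cl, cu)` is realizable. -/
def Realizable {n₁ n₂ : ℕ} (rl ru : Fin n₁ → ℕ) (cl cu : Fin n₂ → ℕ) : Prop :=
  ∃ M, IsRealization rl ru cl cu M

/-- The number of edges of the bipartite graph given by `M`. -/
def edges {n₁ n₂ : ℕ} (M : Fin n₁ → Fin n₂ → Bool) : ℕ :=
  (univ.filter fun p : Fin n₁ × Fin n₂ => M p.1 p.2 = true).card

/-- `max (0, δ₁)` where `δ₁ = max over 1 ≤ j ≤ n₁ of (S_j(rl) - S_j(cl'))`
computed in the integers, `cl'` being the conjugate of `cl` of length `n₁`. -/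
def delta1 {n₁ n₂ : ℕ} (rl : Fin n₁ → ℕ) (cl : Fin n₂ → ℕ) : ℕ :=
  (Finset.Icc 1 n₁).sup fun j =>
    ((psum rl j : ℤ) - (psum (conjVec n₁ cl) j : ℤ)).toNat

/-- Clear the entry `(a, b)`. -/
def setE {n₁ n₂ : ℕ} (M : Fin n₁ → Fin n₂ → Bool) (a : Fin n₁) (b : Fin n₂) (v : Bool) :
    Fin n₁ → Fin n₂ → Bool :=
  fun i j => if i = a ∧ j = b then v else M i j

lemma degU_clr {n₁ n₂ : ℕ} (M : Fin n₁ → Fin n₂ → Bool) (a : Fin n₁) (b : Fin n₂)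
    (h : M a b = true) (i : Fin n₁) :
    degU M i = degU (setE M a b false) i + if i = a then 1 else 0 := by
  unfold degU setE
  by_cases hi : i = a
  · subst hi
    have : (univ.filter fun j => M i j = true) =
        insert b (univ.filter fun j => (if i = i ∧ j = b then false else M i j) = true) := by
      ext j
      by_cases hj : j = b <;> simp [hj, h]
    rw [this, card_insert_of_notMem (by simp)]
    simp
  · simp [hi]

lemma degV_clr {n₁ n₂ : ℕ} (M : Fin n₁ → Fin n₂ → Bool) (a : Fin n₁) (b : Fin n₂)
    (h : M a b = true) (j : Fin n₂) :
    degV M j = degV (setE M a b false) j + if j = b then 1 else 0 := by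
  unfold degV setE
  by_cases hj : j = b
  · subst hj
    have : (univ.filter fun i => M i j = true) =
        insert a (univ.filter fun i => (if i = a ∧ j = j then false else M i j) = true) := by
      ext i
      by_cases hi : i = a <;> simp [hi, h]
    rw [this, card_insert_of_notMem (by simp)]
    simp
  · simp [hj]

lemma setE_setE {n₁ n₂ : ℕ} (M : Fin n₁ → Fin n₂ → Bool) (a : Fin n₁) (b : Fin n₂)
    (h : M a b = false) : setE (setE M a b true) a b false = M := by
  funext i j
  unfold setE
  by_cases hi : i = a ∧ j = b
  · simp [hi, h]
  · simp [hi]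

/-- Rows reachable by alternating walks of length `k` from `E`. -/
def RR {n₁ n₂ : ℕ} (E : Fin n₁ → Prop) (M : Fin n₁ → Fin n₂ → Bool) : ℕ → Fin n₁ → Prop
  | 0, i => E i
  | k + 1, i => ∃ i' j, RR E M k i' ∧ M i' j = true ∧ M i j = false

lemma RR_congr {n₁ n₂ : ℕ} (E : Fin n₁ → Prop) (M M' : Fin n₁ → Fin n₂ → Bool) (a : Fin n₁)
    (hM : ∀ i, i ≠ a → M' i = M i) (k : ℕ) (ha : ∀ l ≤ k, ¬ RR E M l a) :
    ∀ i, RR E M k i → RR E M' k i := by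
  induction k with
  | zero => intro i h; exact h
  | succ k ih =>
    intro i h
    have hia : i ≠ a := by rintro rfl; exact ha _ le_rfl h
    obtain ⟨i', j, h1, h2, h3⟩ := h
    have hia' : i' ≠ a := by rintro rfl; exact ha _ (Nat.le_succ k) h1
    refine ⟨i', j, ih (fun l hl => ha l (by omega)) i' h1, ?_, ?_⟩
    · rw [hM _ hia']; exact h2
    · rw [hM _ hia]; exact h3

lemma augment {n₁ n₂ : ℕ} (E : Fin n₁ → Prop) (k : ℕ) :
    ∀ (M : Fin n₁ → Fin n₂ → Bool) (i : Fin n₁) (j : Fin n₂), RR E M k i → M i j = true →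
    ∃ (M' : Fin n₁ → Fin n₂ → Bool) (i0 : Fin n₁), E i0 ∧
      (∀ x, degU M x = degU M' x + if x = i0 then 1 else 0) ∧
      (∀ y, degV M y = degV M' y + if y = j then 1 else 0) := by
  induction k using Nat.strong_induction_on with
  | _ k ih =>
  intro M i j hR hij
  by_cases hex : ∃ l < k, RR E M l i
  · obtain ⟨l, hl, hRl⟩ := hex
    exact ih l hl M i j hRl hij
  push Not at hex
  cases k with
  | zero => exact ⟨setE M i j false, i, hR, degU_clr M i j hij, degV_clr M i j hij⟩
  | succ k =>
    obtain ⟨i', b, h1, h2, h3⟩ := hR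
    have hii : i' ≠ i := by rintro rfl; simp [h2] at h3
    have hjb : j ≠ b := by rintro rfl; simp [hij] at h3
    set M1 := setE M i j false with hM1
    have hM1b : M1 i b = false := by simp [hM1, setE, h3]
    set M2 := setE M1 i b true with hM2
    have hM2M : ∀ x, x ≠ i → M2 x = M x := by
      intro x hx
      funext y
      simp [hM2, hM1, setE, hx]
    have hM2b : M2 i b = true := by simp [hM2, setE]
    have hback := setE_setE M1 i b hM1b
    rw [← hM2] at hback
    obtain ⟨M', i0, hE, hU, hV⟩ := ih k (Nat.lt_succ_self k) M2 i' b
      (RR_congr E M M2 i hM2M k (fun l hl => hex l (by omega)) i' h1)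
      (by rw [hM2M _ hii]; exact h2)
    refine ⟨M', i0, hE, fun x => ?_, fun y => ?_⟩
    · have e1 := degU_clr M i j hij x
      rw [← hM1] at e1
      have e2 := degU_clr M2 i b hM2b x
      rw [hback] at e2
      have e3 := hU x
      omega
    · have e1 := degV_clr M i j hij y
      rw [← hM1] at e1
      have e2 := degV_clr M2 i b hM2b y
      rw [hback] at e2
      have e3 := hV y
      omega

lemma edges_eq_sumU {n₁ n₂ : ℕ} (M : Fin n₁ → Fin n₂ → Bool) :
    edges M = ∑ i, degU M i := by
  simp only [edges, degU, card_filter]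
  rw [← univ_product_univ, sum_product]

lemma edges_eq_sumV {n₁ n₂ : ℕ} (M : Fin n₁ → Fin n₂ → Bool) :
    edges M = ∑ j, degV M j := by
  simp only [edges, degV, card_filter]
  rw [← univ_product_univ, sum_product_right]

lemma psum_conj {n₁ n₂ : ℕ} (c : Fin n₂ → ℕ) (k : ℕ) (hk : k ≤ n₁) :
    psum (conjVec n₁ c) k = ∑ v, min (c v) k := by
  simp only [psum, conjVec, conj, card_filter]
  rw [sum_comm]
  refine sum_congr rfl fun v _ => ?_
  rw [← card_filter, filter_filter]
  have h : (univ.filter fun a : Fin n₁ => (a : ℕ) < k ∧ (a : ℕ) + 1 ≤ c v) =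
      univ.filter fun a : Fin n₁ => (a : ℕ) < min (c v) k := by
    ext a
    simp
    omega
  rw [h, Fin.card_filter_val_lt]
  omega

lemma psum_all {n : ℕ} (c : Fin n → ℕ) : psum c n = ∑ v, c v := by
  simp [psum]

lemma sum_le_psum {n : ℕ} (r : Fin n → ℕ) (hr : Antitone r) (A : Finset (Fin n)) :
    ∑ i ∈ A, r i ≤ psum r A.card := by
  unfold psum
  set T := univ.filter fun i : Fin n => (i : ℕ) < A.card with hT
  have hAn : A.card ≤ n := by simpa using card_le_univ A
  have hTc : T.card = A.card := by
    rw [hT, Fin.card_filter_val_lt]; omega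
  have hc : (A \ T).card = (T \ A).card := by
    have h1 := card_sdiff_add_card_inter A T
    have h2 := card_sdiff_add_card_inter T A
    rw [inter_comm] at h2
    omega
  rw [← sum_inter_add_sum_sdiff A T, ← sum_inter_add_sum_sdiff T A, inter_comm T A]
  refine Nat.add_le_add_left ?_ _
  rcases Nat.eq_zero_or_pos A.card with h0 | h0
  · rw [card_eq_zero] at h0
    simp [h0]
  · let m : Fin n := ⟨A.card - 1, by omega⟩
    calc ∑ i ∈ A \ T, r i ≤ (A \ T).card • r m := by
          refine sum_le_card_nsmul _ _ _ fun x hx => hr ?_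
          simp [hT] at hx
          rw [Fin.le_def]
          show A.card - 1 ≤ (x : ℕ)
          omega
      _ = (T \ A).card • r m := by rw [hc]
      _ ≤ ∑ i ∈ T \ A, r i := by
          refine card_nsmul_le_sum _ _ _ fun x hx => hr ?_
          simp [hT] at hx
          rw [Fin.le_def]
          show (x : ℕ) ≤ A.card - 1
          omega

lemma lower_bound {n₁ n₂ : ℕ} (rl ru : Fin n₁ → ℕ) (cl cu : Fin n₂ → ℕ)
    (N : Fin n₁ → Fin n₂ → Bool) (hN : IsRealization rl ru cl cu N) :
    psum cl n₂ + delta1 rl cl ≤ edges N := by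
  have hV := edges_eq_sumV N
  have hcl : ∑ v, cl v ≤ ∑ v, degV N v := sum_le_sum fun v _ => (hN.2 v).1
  have key : delta1 rl cl ≤ edges N - psum cl n₂ := by
    refine Finset.sup_le fun k hk => ?_
    rw [mem_Icc] at hk
    rw [psum_conj cl k hk.2, psum_all]
    have h1 : psum rl k ≤ ∑ v, min (degV N v) k := by
      unfold psum
      calc ∑ i ∈ univ.filter (fun i : Fin n₁ => (i : ℕ) < k), rl i
          ≤ ∑ i ∈ univ.filter (fun i : Fin n₁ => (i : ℕ) < k), degU N i :=
            sum_le_sum fun i _ => (hN.1 i).1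
        _ = ∑ v, ∑ i ∈ univ.filter (fun i : Fin n₁ => (i : ℕ) < k),
              if N i v = true then 1 else 0 := by
            simp only [degU, card_filter]
            rw [sum_comm]
        _ ≤ _ := by
            refine sum_le_sum fun v _ => ?_
            rw [← card_filter, filter_filter]
            refine le_min (card_le_card fun i hi => ?_) ?_
            · simp at hi ⊢
              exact hi.2
            · calc _ ≤ (univ.filter fun i : Fin n₁ => (i : ℕ) < k).card :=
                    card_le_card fun i hi => by simp at hi ⊢; exact hi.1
                _ ≤ k := by rw [Fin.card_filter_val_lt]; omega
    have h2 : ∑ v, min (degV N v) k + ∑ v, cl v ≤ ∑ v, min (cl v) k + ∑ v, degV N v := by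
      rw [← sum_add_distrib, ← sum_add_distrib]
      refine sum_le_sum fun v _ => ?_
      have := (hN.2 v).1
      omega
    omega
  rw [psum_all] at key ⊢
  omega

lemma upper_bound {n₁ n₂ : ℕ} (rl ru : Fin n₁ → ℕ) (cl cu : Fin n₂ → ℕ) (hrl : Antitone rl)
    (M : Fin n₁ → Fin n₂ → Bool) (hM : IsRealization rl ru cl cu M)
    (hmin : ∀ N : Fin n₁ → Fin n₂ → Bool, IsRealization rl ru cl cu N → edges M ≤ edges N) :
    edges M ≤ psum cl n₂ + delta1 rl cl := by
  classical
  let E : Fin n₁ → Prop := fun i => rl i < degU M i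
  let A : Finset (Fin n₁) := univ.filter fun i => ¬ ∃ k, RR E M k i
  let B : Finset (Fin n₂) := univ.filter fun j => ∃ i k, RR E M k i ∧ M i j = true
  have hB : ∀ j ∈ B, degV M j = cl j := by
    intro j hj
    simp only [B, mem_filter, mem_univ, true_and] at hj
    obtain ⟨i, k, hR, hij⟩ := hj
    by_contra hne
    have hlt : cl j < degV M j := lt_of_le_of_ne (hM.2 j).1 (Ne.symm hne)
    obtain ⟨M', i0, hE, hU, hV⟩ := augment E k M i j hR hij
    have hE' : rl i0 < degU M i0 := hE
    have hreal : IsRealization rl ru cl cu M' := by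
      refine ⟨fun x => ?_, fun y => ?_⟩
      · have h1 := hU x
        have h2 := hM.1 x
        by_cases hx : x = i0
        · subst hx; simp at h1; omega
        · simp [hx] at h1; omega
      · have h1 := hV y
        have h2 := hM.2 y
        by_cases hy : y = j
        · subst hy; simp at h1; omega
        · simp [hy] at h1; omega
    have h1 := hmin M' hreal
    rw [edges_eq_sumU M, edges_eq_sumU M', sum_congr rfl (fun x _ => hU x),
      sum_add_distrib] at h1
    simp at h1
  have hA : ∀ i ∈ A, degU M i = rl i := by
    intro i hi
    simp only [A, mem_filter, mem_univ, true_and] at hi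
    by_contra hne
    exact hi ⟨0, lt_of_le_of_ne (hM.1 i).1 (Ne.symm hne)⟩
  have hAB : ∀ i ∈ A, ∀ j ∈ B, M i j = true := by
    intro i hi j hj
    simp only [A, B, mem_filter, mem_univ, true_and] at hi hj
    obtain ⟨i', k, hR, hij⟩ := hj
    by_contra hne
    exact hi ⟨k + 1, i', j, hR, hij, by simpa using hne⟩
  have hAcB : ∀ i, i ∉ A → ∀ j, j ∉ B → M i j = false := by
    intro i hi j hj
    simp only [A, B, mem_filter, mem_univ, true_and, not_not] at hi hj
    obtain ⟨k, hR⟩ := hi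
    by_contra hne
    exact hj ⟨i, k, hR, by simpa using hne⟩
  -- counting
  let f : Fin n₁ → Fin n₂ → ℕ := fun i j => if M i j = true then 1 else 0
  have hfU : ∀ i, degU M i = ∑ j, f i j := fun i => by simp only [degU, card_filter, f]
  have hfV : ∀ j, degV M j = ∑ i, f i j := fun j => by simp only [degV, card_filter, f]
  have c1 : edges M = ∑ i ∈ A, degU M i + ∑ i ∈ Aᶜ, ∑ j ∈ B, f i j := by
    rw [edges_eq_sumU, ← sum_add_sum_compl A]
    congr 1
    refine sum_congr rfl fun i hi => ?_
    rw [hfU, ← sum_add_sum_compl B]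
    have : ∑ j ∈ Bᶜ, f i j = 0 := sum_eq_zero fun j hj => by
      rw [mem_compl] at hi hj
      simp [f, hAcB i hi j hj]
    omega
  have c2 : ∑ j ∈ B, degV M j = A.card * B.card + ∑ i ∈ Aᶜ, ∑ j ∈ B, f i j := by
    rw [sum_congr rfl fun j _ => hfV j, sum_comm, ← sum_add_sum_compl A]
    congr 1
    rw [sum_congr rfl fun i hi => sum_congr rfl fun j hj =>
      (by simp [f, hAB i hi j hj] : f i j = 1)]
    simp
  have hB' : ∑ j ∈ B, degV M j = ∑ j ∈ B, cl j := sum_congr rfl hB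
  have hA' : ∑ i ∈ A, degU M i = ∑ i ∈ A, rl i := sum_congr rfl hA
  rw [hB'] at c2
  rw [hA'] at c1
  have c3 := sum_le_psum rl hrl A
  have hAn : A.card ≤ n₁ := by simpa using card_le_univ A
  have c4 : ∑ j ∈ B, cl j + ∑ v, min (cl v) A.card ≤ ∑ v, cl v + A.card * B.card := by
    rw [← sum_add_sum_compl B, ← sum_add_sum_compl B cl]
    have h1 : ∑ j ∈ B, min (cl j) A.card ≤ B.card • A.card :=
      sum_le_card_nsmul _ _ _ fun x _ => min_le_right _ _
    have h2 : ∑ j ∈ Bᶜ, min (cl j) A.card ≤ ∑ j ∈ Bᶜ, cl j :=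
      sum_le_sum fun x _ => min_le_left _ _
    rw [smul_eq_mul, mul_comm] at h1
    omega
  have c5 : psum rl A.card ≤ delta1 rl cl + ∑ v, min (cl v) A.card := by
    rcases Nat.eq_zero_or_pos A.card with h0 | h0
    · rw [h0]; simp [psum]
    · have h1 : ((psum rl A.card : ℤ) - (psum (conjVec n₁ cl) A.card : ℤ)).toNat ≤
          delta1 rl cl :=
        Finset.le_sup (f := fun j =>
          ((psum rl j : ℤ) - (psum (conjVec n₁ cl) j : ℤ)).toNat) (mem_Icc.2 ⟨h0, hAn⟩)
      rw [psum_conj cl _ hAn] at h1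
      omega
  rw [psum_all]
  omega

/-- Existence of an edge-minimal realization with exactly
`S_{n₂}(cl) + max(0, δ₁)` edges. -/
theorem exists_edge_minimal_realization {n₁ n₂ : ℕ}
    (rl ru : Fin n₁ → ℕ) (cl cu : Fin n₂ → ℕ)
    (hrl : Antitone rl) (hcl : Antitone cl) (hr : rl ≤ ru) (hc : cl ≤ cu)
    (hreal : Realizable rl ru cl cu) :
    ∃ M : Fin n₁ → Fin n₂ → Bool, IsRealization rl ru cl cu M ∧
      edges M = psum cl n₂ + delta1 rl cl ∧
      ∀ N : Fin n₁ → Fin n₂ → Bool, IsRealization rl ru cl cu N →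
        edges M ≤ edges N := by
  obtain ⟨M, hM, hmin⟩ := Set.exists_min_image {M | IsRealization rl ru cl cu M} edges
    (Set.toFinite _) hreal
  exact ⟨M, hM, le_antisymm (upper_bound rl ru cl cu hrl M hM hmin)
    (lower_bound rl ru cl cu M hM), hmin⟩
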